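/- Let μ ≥ 0 and λ ≥ 1 be real and let f belong to the class S*_{Σ,q}^η(μ,λ;φ). Then 2(λ[3]_q − 1)·M₃·L₃·(a₃ − a₂²) = (1/2)·E₁·(c₂ − d₂); moreover, if M₂ ≠ 0 and M₃ ≠ 0, then a₃ = E₁(c₂ − d₂)/(4(λ[3]_q − 1)·M₃·L₃) + E₁²·c₁²/(4λ²·M₂²·([2]_q)²·L₂²). -/

import Mathlib

open Complex Metric Set

noncomputable def symQ (q x : ℝ) : ℝ := (Real.rpow q x - Real.rpow q (-x)) / (q - q⁻¹)

noncomputable def Dq (q : ℝ) (f : ℂ → ℂ) (z : ℂ) : ℂ :=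
  if z = 0 then deriv f 0
  else (f ((q : ℂ) * z) - f (z / (q : ℂ))) / (((q : ℂ) - (q : ℂ)⁻¹) * z)

def IsSchwarz (u : ℂ → ℂ) : Prop :=
  AnalyticOnNhd ℂ u (ball 0 1) ∧ u 0 = 0 ∧ ∀ z ∈ ball (0 : ℂ) 1, u z ∈ ball (0 : ℂ) 1

noncomputable def taylorCoeff (h : ℂ → ℂ) (n : ℕ) : ℂ := iteratedDeriv n h 0 / (n.factorial : ℂ)

noncomputable def Lcoef (q η : ℝ) (n : ℕ) : ℝ := symQ q (1 + η) / symQ q ((n : ℝ) + η)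

noncomputable def Jop (q η : ℝ) (h : ℂ → ℂ) (z : ℂ) : ℂ :=
  ∑' n, (Lcoef q η n : ℂ) * taylorCoeff h n * z ^ n

noncomputable def Phi (q η lam mu : ℝ) (h : ℂ → ℂ) (z : ℂ) : ℂ :=
  (2 * z * Dq q (Jop q η h) z ^ (lam : ℂ) / (Jop q η h z - Jop q η h (-z))) ^ (mu : ℂ) *
    (2 * Dq q (fun ζ => ζ * Dq q (Jop q η h) ζ) z ^ (lam : ℂ) /
        Dq q (fun ζ => Jop q η h ζ - Jop q η h (-ζ)) z) ^ ((1 - mu : ℝ) : ℂ)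

noncomputable def M2v (q mu : ℝ) : ℝ := mu - (mu - 1) * symQ q 2
noncomputable def M3v (q mu : ℝ) : ℝ := mu - (mu - 1) * symQ q 3
noncomputable def N2v (q mu : ℝ) : ℝ := mu - (mu - 1) * symQ q 2 ^ 2

noncomputable def Omegav (q η lam mu : ℝ) : ℝ :=
  2 * (lam * symQ q 3 - 1) * M3v q mu * Lcoef q η 3 +
    lam * (lam * M2v q mu ^ 2 - N2v q mu) * symQ q 2 ^ 2 * Lcoef q η 2 ^ 2

noncomputable def Thetav (q η lam mu E1 : ℝ) (E : ℕ → ℂ) : ℂ :=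
  ((2 * (lam * symQ q 3 - 1) * M3v q mu * E1 ^ 2 * Lcoef q η 3 : ℝ) : ℂ) +
    (lam : ℂ) * (((lam * M2v q mu ^ 2 : ℝ) : ℂ) * (((E1 ^ 2 + 2 * E1 : ℝ) : ℂ) - 2 * E 2) -
        ((N2v q mu * E1 ^ 2 : ℝ) : ℂ)) * ((symQ q 2 ^ 2 * Lcoef q η 2 ^ 2 : ℝ) : ℂ)

noncomputable def Gammav (q η lam : ℝ) : ℝ :=
  2 * (lam * symQ q 3 - 1) * Lcoef q η 3 + lam * (lam - 1) * symQ q 2 ^ 2 * Lcoef q η 2 ^ 2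

noncomputable def Xiv (q η lam E1 : ℝ) (E : ℕ → ℂ) : ℂ :=
  ((2 * (lam * symQ q 3 - 1) * E1 ^ 2 * Lcoef q η 3 : ℝ) : ℂ) +
    (lam : ℂ) * ((((lam - 1) * E1 ^ 2 : ℝ) : ℂ) + 2 * (lam : ℂ) * ((E1 : ℂ) - E 2)) *
      ((symQ q 2 ^ 2 * Lcoef q η 2 ^ 2 : ℝ) : ℂ)

noncomputable def Psiv (q η lam : ℝ) : ℝ :=
  2 * (lam * symQ q 3 - 1) * symQ q 3 * Lcoef q η 3 +
    lam * (lam - 1) * symQ q 2 ^ 4 * Lcoef q η 2 ^ 2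

noncomputable def Upsv (q η lam E1 : ℝ) (E : ℕ → ℂ) : ℂ :=
  ((2 * (lam * symQ q 3 - 1) * symQ q 3 * E1 ^ 2 * Lcoef q η 3 : ℝ) : ℂ) +
    (lam : ℂ) * ((((lam - 1) * E1 ^ 2 : ℝ) : ℂ) + 2 * (lam : ℂ) * ((E1 : ℂ) - E 2)) *
      ((symQ q 2 ^ 4 * Lcoef q η 2 ^ 2 : ℝ) : ℂ)

/-!
All the information needed sits in second-order expansions at the origin. If `J f` has
coefficients `A = L₂ a₂` and `B = L₃ a₃`, then

`Φ_f(z) = 1 + λ[2]M₂A z + ((λ[3] - 1)M₃B + λ(λM₂² - N₂)/2 · [2]²A²) z² + o(z²)`,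

while `u = c₁/2 · z + (c₂/2 - c₁²/4) z² + o(z²)` gives the expansion of `φ ∘ u`. For the inverse `g`
the coefficients `a₂, a₃` become `-a₂, 2a₂² - a₃`. Comparing the coefficients of `z` for `f` and `g`
gives `d₁ = -c₁`, so in the difference of the coefficients of `z²` everything that is quadratic in
`a₂` or in `c₁` cancels, except for the `a₂²` coming from `2a₂² - a₃`. The formula for `a₃` then
follows by expressing `a₂` through `c₁`.
-/

open Filter Topology Asymptotics
open FormalMultilinearSeries (ofScalars)

section QuadraticExpansion

variable {𝕜 : Type*} [NontriviallyNormedField 𝕜]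

/-- `F z = a₀ + a₁ z + a₂ z² + o(z²)` as `z → 0`, `z ≠ 0`. The origin is excluded because `Phi` and
quotients such as `H z / z` take junk values there. -/
def HasQuadraticExpansion (F : 𝕜 → 𝕜) (a₀ a₁ a₂ : 𝕜) : Prop :=
  (fun z => F z - (a₀ + a₁ * z + a₂ * z ^ 2)) =o[𝓝[≠] 0] fun z => z ^ 2

lemma isLittleO_pow_pow_nhdsNE {m n : ℕ} (hmn : m < n) :
    (fun z : 𝕜 => z ^ n) =o[𝓝[≠] 0] fun z => z ^ m :=
  (isLittleO_pow_pow hmn).mono nhdsWithin_le_nhds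

lemma isBigO_quadratic_one (a₀ a₁ a₂ : 𝕜) :
    (fun z : 𝕜 => a₀ + a₁ * z + a₂ * z ^ 2) =O[𝓝[≠] 0] fun _ => (1 : 𝕜) :=
  ((show Continuous fun z : 𝕜 => a₀ + a₁ * z + a₂ * z ^ 2 by fun_prop).tendsto 0
    |>.mono_left nhdsWithin_le_nhds).isBigO_one 𝕜

lemma eq_zero_of_const_mul_pow_isLittleO {c : 𝕜} {n : ℕ}
    (h : (fun z : 𝕜 => c * z ^ n) =o[𝓝[≠] 0] fun z => z ^ n) : c = 0 := by
  by_contra hc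
  refine isLittleO_irrefl (Eventually.frequently ?_) ((isLittleO_const_mul_left_iff hc).1 h)
  filter_upwards [self_mem_nhdsWithin] with z hz using pow_ne_zero n hz

lemma isLittleO_sub_quadratic_of_hasFPowerSeriesAt {F : 𝕜 → 𝕜}
    {p : FormalMultilinearSeries 𝕜 𝕜 𝕜} (h : HasFPowerSeriesAt F p 0) :
    (fun z => F z - (p.coeff 0 + p.coeff 1 * z + p.coeff 2 * z ^ 2)) =o[𝓝 0] fun z => z ^ 2 := by
  have cube_isLittleO : (fun z : 𝕜 => ‖z‖ ^ 3) =o[𝓝 0] fun z : 𝕜 => z ^ 2 := by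
    simpa only [norm_pow] using (isLittleO_pow_pow (𝕜 := 𝕜) (m := 2) (n := 3) (by simp)).norm_left
  refine ((h.isBigO_sub_partialSum_pow 3).trans_isLittleO cube_isLittleO).congr_left fun z => ?_
  simp only [zero_add, FormalMultilinearSeries.partialSum, Finset.sum_range_succ,
    Finset.sum_range_zero, FormalMultilinearSeries.apply_eq_pow_smul_coeff, smul_eq_mul]
  ring

namespace HasQuadraticExpansion

variable {F G : 𝕜 → 𝕜} {a₀ a₁ a₂ b₀ b₁ b₂ : 𝕜}

lemma congr (h : HasQuadraticExpansion F a₀ a₁ a₂) (hFG : F =ᶠ[𝓝[≠] 0] G) :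
    HasQuadraticExpansion G a₀ a₁ a₂ :=
  IsLittleO.congr' h (hFG.mono fun z hz => by simp only [hz]) .rfl

lemma const (k : 𝕜) : HasQuadraticExpansion (fun _ => k) k 0 0 :=
  (isLittleO_zero _ _).congr_left fun z => by ring

lemma add (hF : HasQuadraticExpansion F a₀ a₁ a₂) (hG : HasQuadraticExpansion G b₀ b₁ b₂) :
    HasQuadraticExpansion (fun z => F z + G z) (a₀ + b₀) (a₁ + b₁) (a₂ + b₂) :=
  (IsLittleO.add hF hG).congr_left fun z => by ring

lemma const_mul (k : 𝕜) (h : HasQuadraticExpansion F a₀ a₁ a₂) :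
    HasQuadraticExpansion (fun z => k * F z) (k * a₀) (k * a₁) (k * a₂) :=
  (IsLittleO.const_mul_left h k).congr_left fun z => by ring

lemma isBigO_one (h : HasQuadraticExpansion F a₀ a₁ a₂) :
    F =O[𝓝[≠] 0] fun _ => (1 : 𝕜) := by
  have remainder : (fun z => F z - (a₀ + a₁ * z + a₂ * z ^ 2)) =O[𝓝[≠] 0] fun _ => (1 : 𝕜) :=
    (h.trans (by simpa using isLittleO_pow_pow_nhdsNE (𝕜 := 𝕜) two_pos)).isBigO
  exact (remainder.add (isBigO_quadratic_one a₀ a₁ a₂)).congr_left fun z => by ring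

lemma isBigO_id (h : HasQuadraticExpansion F 0 a₁ a₂) : F =O[𝓝[≠] 0] fun z => z := by
  have remainder : (fun z => F z - (0 + a₁ * z + a₂ * z ^ 2)) =O[𝓝[≠] 0] fun z => z :=
    (h.trans (by simpa using isLittleO_pow_pow_nhdsNE (𝕜 := 𝕜) one_lt_two)).isBigO
  have polynomial : (fun z : 𝕜 => z * (a₁ + a₂ * z + 0 * z ^ 2)) =O[𝓝[≠] 0] fun z => z := by
    simpa only [mul_one] using
      (isBigO_refl (fun z : 𝕜 => z) _).mul (isBigO_quadratic_one a₁ a₂ 0)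
  exact (remainder.add polynomial).congr_left fun z => by ring

lemma tendsto (h : HasQuadraticExpansion F a₀ a₁ a₂) : Tendsto F (𝓝[≠] 0) (𝓝 a₀) := by
  have shifted : HasQuadraticExpansion (fun z => F z + -a₀) 0 a₁ a₂ := by
    simpa using h.add (const (-a₀))
  have := shifted.isBigO_id.trans_tendsto (tendsto_id.mono_left nhdsWithin_le_nhds)
  simpa using this.add_const a₀

lemma mul (hF : HasQuadraticExpansion F a₀ a₁ a₂) (hG : HasQuadraticExpansion G b₀ b₁ b₂) :
    HasQuadraticExpansion (fun z => F z * G z)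
      (a₀ * b₀) (a₀ * b₁ + a₁ * b₀) (a₀ * b₂ + a₁ * b₁ + a₂ * b₀) := by
  have left_error := IsLittleO.mul_isBigO hF hG.isBigO_one
  have right_error := (isBigO_quadratic_one a₀ a₁ a₂).mul_isLittleO hG
  have high_order_terms :=
    (isLittleO_pow_pow_nhdsNE (𝕜 := 𝕜) (m := 2) (n := 3) (by simp)).mul_isBigO
      (isBigO_quadratic_one (a₁ * b₂ + a₂ * b₁) (a₂ * b₂) 0)
  simp only [mul_one, one_mul] at left_error right_error high_order_terms
  exact ((left_error.add right_error).add high_order_terms).congr_left fun z => by ring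

lemma eq_zero (h : HasQuadraticExpansion (fun _ => 0) a₀ a₁ a₂) : a₀ = 0 ∧ a₁ = 0 ∧ a₂ = 0 := by
  obtain rfl : a₀ = 0 := tendsto_nhds_unique h.tendsto tendsto_const_nhds
  have linear : (fun z : 𝕜 => a₁ * z ^ 1) =o[𝓝[≠] 0] fun z => z ^ 1 :=
    ((h.trans (isLittleO_pow_pow_nhdsNE one_lt_two)).neg_left.sub
      ((isLittleO_pow_pow_nhdsNE one_lt_two).const_mul_left a₂)).congr_left fun z => by ring
  obtain rfl : a₁ = 0 := eq_zero_of_const_mul_pow_isLittleO linear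
  exact ⟨rfl, rfl, eq_zero_of_const_mul_pow_isLittleO (h.neg_left.congr_left fun z => by ring)⟩

lemma unique (h : HasQuadraticExpansion F a₀ a₁ a₂) (h' : HasQuadraticExpansion F b₀ b₁ b₂) :
    a₀ = b₀ ∧ a₁ = b₁ ∧ a₂ = b₂ := by
  have difference : HasQuadraticExpansion (fun _ => 0) (a₀ - b₀) (a₁ - b₁) (a₂ - b₂) :=
    (IsLittleO.sub h h').congr_left fun z => by ring
  simpa only [sub_eq_zero] using difference.eq_zero

lemma comp_const_mul (h : HasQuadraticExpansion F a₀ a₁ a₂) {k : 𝕜} (hk : k ≠ 0) :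
    HasQuadraticExpansion (fun z => F (k * z)) a₀ (k * a₁) (k ^ 2 * a₂) := by
  have scale : Tendsto (fun z : 𝕜 => k * z) (𝓝[≠] 0) (𝓝[≠] 0) := by
    refine tendsto_nhdsWithin_of_tendsto_nhds_of_eventually_within _ ?_ ?_
    · exact ((continuous_const_mul k).tendsto' 0 0 (mul_zero k)).mono_left nhdsWithin_le_nhds
    · filter_upwards [self_mem_nhdsWithin] with z hz using mul_ne_zero hk hz
  have sq_isBigO : (fun z : 𝕜 => (k * z) ^ 2) =O[𝓝[≠] 0] fun z => z ^ 2 :=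
    ((isBigO_refl _ _).const_mul_left (k ^ 2)).congr_left fun z => by ring
  exact ((IsLittleO.comp_tendsto h scale).trans_isBigO sq_isBigO).congr_left fun z => by
    simp only [Function.comp_apply]
    ring

lemma of_hasFPowerSeriesAt {p : FormalMultilinearSeries 𝕜 𝕜 𝕜} (h : HasFPowerSeriesAt F p 0) :
    HasQuadraticExpansion F (p.coeff 0) (p.coeff 1) (p.coeff 2) :=
  (isLittleO_sub_quadratic_of_hasFPowerSeriesAt h).mono nhdsWithin_le_nhds

lemma div_self_of_hasFPowerSeriesAt {p : FormalMultilinearSeries 𝕜 𝕜 𝕜}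
    (h : HasFPowerSeriesAt F p 0) (hF : F 0 = 0) :
    HasQuadraticExpansion (fun z => F z / z) (p.coeff 1) (p.coeff 2) (p.coeff 3) := by
  have slope_expansion := of_hasFPowerSeriesAt h.has_fpower_series_dslope_fslope
  simp only [FormalMultilinearSeries.coeff_fslope] at slope_expansion
  refine slope_expansion.congr ?_
  filter_upwards [self_mem_nhdsWithin] with z hz
  rw [dslope_of_ne _ hz, slope_def_field, hF, sub_zero, sub_zero]

lemma comp_of_hasFPowerSeriesAt {p : FormalMultilinearSeries 𝕜 𝕜 𝕜}
    (hG : HasFPowerSeriesAt G p 0) (hF : HasQuadraticExpansion F 0 a₁ a₂) :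
    HasQuadraticExpansion (fun z => G (F z))
      (p.coeff 0) (p.coeff 1 * a₁) (p.coeff 1 * a₂ + p.coeff 2 * a₁ ^ 2) := by
  have remainder := ((isLittleO_sub_quadratic_of_hasFPowerSeriesAt hG).comp_tendsto
    hF.tendsto).trans_isBigO (hF.isBigO_id.pow 2)
  have polynomial := ((const (p.coeff 0)).add (hF.const_mul (p.coeff 1))).add
    ((hF.mul hF).const_mul (p.coeff 2))
  exact (remainder.add polynomial).congr_left fun z => by
    simp only [Function.comp_apply]
    ring

end HasQuadraticExpansion

end QuadraticExpansion

section PowerSeries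

variable {𝕜 : Type*} [NontriviallyNormedField 𝕜]

lemma radius_ofScalars_pos_of_summable {c : ℕ → 𝕜} {z : 𝕜} (hz : z ≠ 0)
    (h : Summable fun n => c n * z ^ n) : 0 < (ofScalars 𝕜 c).radius := by
  have le_radius : (‖z‖₊ : ENNReal) ≤ (ofScalars 𝕜 c).radius := by
    refine FormalMultilinearSeries.le_radius_of_tendsto (l := 0) _ ?_
    simpa using h.tendsto_atTop_zero.norm
  exact lt_of_lt_of_le (by simpa using hz) le_radius

lemma radius_ofScalars_le_of_eventually_norm_le {b c : ℕ → 𝕜}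
    (h : ∀ᶠ n in atTop, ‖c n‖ ≤ ‖b n‖) :
    (ofScalars 𝕜 b).radius ≤ (ofScalars 𝕜 c).radius := by
  refine ENNReal.le_of_forall_nnreal_lt fun r hr => ?_
  refine FormalMultilinearSeries.le_radius_of_isBigO _
    (IsBigO.trans ?_ ((ofScalars 𝕜 b).isLittleO_one_of_lt_radius hr).isBigO)
  refine IsBigO.of_norm_eventuallyLE (h.mono fun n hn => ?_)
  simp only [FormalMultilinearSeries.ofScalars_norm, norm_mul, norm_norm, norm_pow]
  rw [Real.norm_of_nonneg r.coe_nonneg]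
  gcongr

variable [CompleteSpace 𝕜]

lemma hasFPowerSeriesAt_tsum {c : ℕ → 𝕜} (h : 0 < (ofScalars 𝕜 c).radius) :
    HasFPowerSeriesAt (fun z => ∑' n, c n * z ^ n) (ofScalars 𝕜 c) 0 := by
  have sum_eq : (ofScalars 𝕜 c).sum = fun z => ∑' n, c n * z ^ n :=
    FormalMultilinearSeries.ofScalarsSum_eq_tsum c
  exact sum_eq ▸ ((ofScalars 𝕜 c).hasFPowerSeriesOnBall h).hasFPowerSeriesAt

-- A divergent `tsum` is `0`, so a nonzero value certifies convergence.
lemma hasFPowerSeriesAt_of_eventuallyEq_tsum {F : 𝕜 → 𝕜} {c : ℕ → 𝕜}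
    (h : F =ᶠ[𝓝 0] fun z => ∑' n, c n * z ^ n) (hF : ∃ᶠ z in 𝓝[≠] 0, F z ≠ 0) :
    HasFPowerSeriesAt F (ofScalars 𝕜 c) 0 := by
  obtain ⟨z, hFz, hz, hz0⟩ := (hF.and_eventually
    ((h.filter_mono nhdsWithin_le_nhds).and self_mem_nhdsWithin)).exists
  have summable : Summable fun n => c n * z ^ n := by
    by_contra hs
    exact hFz (hz.trans (tsum_eq_zero_of_not_summable hs))
  exact (hasFPowerSeriesAt_tsum (radius_ofScalars_pos_of_summable hz0 summable)).congr h.symm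

lemma hasFPowerSeriesAt_of_eq_tsum_on_ball {F : 𝕜 → 𝕜} {c : ℕ → 𝕜} {r : ℝ} (hr : 0 < r)
    (h : ∀ z ∈ ball (0 : 𝕜) r, F z = ∑' n, c n * z ^ n)
    (hF : ∀ z ∈ ball (0 : 𝕜) r, z ≠ 0 → F z ≠ 0) :
    HasFPowerSeriesAt F (ofScalars 𝕜 c) 0 := by
  have ball_mem : ball (0 : 𝕜) r ∈ 𝓝 0 := ball_mem_nhds 0 hr
  refine hasFPowerSeriesAt_of_eventuallyEq_tsum (eventually_of_mem ball_mem h)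
    (Eventually.frequently ?_)
  filter_upwards [self_mem_nhdsWithin, nhdsWithin_le_nhds ball_mem] with z hz0 hz using hF z hz hz0

end PowerSeries

section InverseFunction

variable {𝕜 : Type*} [NontriviallyNormedField 𝕜]

lemma coeff_of_leftInverse {f g : 𝕜 → 𝕜} {a b : ℕ → 𝕜}
    (hf : HasFPowerSeriesAt f (ofScalars 𝕜 a) 0) (hf0 : f 0 = 0) (ha1 : a 1 = 1)
    (hg : HasFPowerSeriesAt g (ofScalars 𝕜 b) 0) (hg0 : g 0 = 0)
    (hgf : ∀ᶠ z in 𝓝 0, g (f z) = z) :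
    b 1 = 1 ∧ b 2 = -a 2 ∧ b 3 = 2 * a 2 ^ 2 - a 3 := by
  have f_expansion := HasQuadraticExpansion.of_hasFPowerSeriesAt hf
  have a_zero : a 0 = 0 := by simpa [hf0] using hf.coeff_zero ![]
  have f_div_expansion := HasQuadraticExpansion.div_self_of_hasFPowerSeriesAt hf hf0
  simp only [FormalMultilinearSeries.coeff_ofScalars, a_zero, ha1] at f_expansion f_div_expansion
  have slope_expansion := (HasQuadraticExpansion.comp_of_hasFPowerSeriesAt
    hg.has_fpower_series_dslope_fslope f_expansion).mul f_div_expansion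
  simp only [FormalMultilinearSeries.coeff_fslope, FormalMultilinearSeries.coeff_ofScalars]
    at slope_expansion
  have slope_mul_eq_one : (fun z => dslope g 0 (f z) * (f z / z)) =ᶠ[𝓝[≠] 0] fun _ => 1 := by
    filter_upwards [self_mem_nhdsWithin, nhdsWithin_le_nhds hgf] with z hz hgfz
    have hfz : f z ≠ 0 := fun h => hz (by rw [← hgfz, h, hg0]; rfl)
    have hz : z ≠ 0 := hz
    rw [dslope_of_ne _ hfz, slope_def_field, hgfz, hg0]
    field_simp
    simp
  obtain ⟨coeff₀, coeff₁, coeff₂⟩ :=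
    (slope_expansion.congr slope_mul_eq_one).unique (HasQuadraticExpansion.const 1)
  have b_one : b 1 = 1 := by linear_combination coeff₀
  have b_two : b 2 = -a 2 := by rw [b_one] at coeff₁; linear_combination coeff₁
  refine ⟨b_one, b_two, ?_⟩
  rw [b_one, b_two] at coeff₂
  linear_combination coeff₂

end InverseFunction

section ComplexPower

lemma ring_choose_two {K : Type*} [Field K] [CharZero K] (s : K) :
    Ring.choose s 2 = s * (s - 1) / 2 := by
  have two_mul_choose := Ring.choose_smul_choose s (n := 2) (k := 1) one_le_two
  simp only [Nat.choose_one_right, Ring.choose_one_right, Nat.cast_one, Nat.add_one_sub_one,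
    nsmul_eq_mul, Nat.cast_ofNat] at two_mul_choose
  rw [eq_div_iff two_ne_zero, mul_comm, two_mul_choose]

namespace HasQuadraticExpansion

variable {F G : ℂ → ℂ} {a₁ a₂ : ℂ}

lemma cpow (h : HasQuadraticExpansion F 1 a₁ a₂) (s : ℂ) :
    HasQuadraticExpansion (fun z => F z ^ s) 1 (s * a₁) (s * a₂ + s * (s - 1) / 2 * a₁ ^ 2) := by
  have shifted : HasQuadraticExpansion (fun z => F z + -1) 0 a₁ a₂ := by
    simpa using h.add (const (-1))
  have power := comp_of_hasFPowerSeriesAt (one_add_cpow_hasFPowerSeriesAt_zero (a := s)) shifted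
  simpa [binomialSeries, ring_choose_two] using power

lemma inv (h : HasQuadraticExpansion F 1 a₁ a₂) :
    HasQuadraticExpansion (fun z => (F z)⁻¹) 1 (-a₁) (a₁ ^ 2 - a₂) := by
  convert h.cpow (-1) using 1
  · simp only [Complex.cpow_neg_one]
  · ring
  · ring

lemma cpow_two_mul_cpow_div {b : ℂ} (hF : HasQuadraticExpansion F 1 a₁ a₂)
    (hG : HasQuadraticExpansion G 2 0 (2 * b)) (r s : ℂ) :
    HasQuadraticExpansion (fun z => (2 * F z ^ r / G z) ^ s) 1 (s * r * a₁)
      (s * (r * a₂ - b) + s * r * (s * r - 1) / 2 * a₁ ^ 2) := by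
  have half_G : HasQuadraticExpansion (fun z => 1 / 2 * G z) 1 0 b := by
    convert hG.const_mul (1 / 2) using 1 <;> ring
  have quotient : HasQuadraticExpansion (fun z => 2 * F z ^ r / G z) 1 (r * a₁)
      (r * a₂ - b + r * (r - 1) / 2 * a₁ ^ 2) := by
    convert (hF.cpow r).mul half_G.inv using 1
    · funext z
      rw [mul_inv, one_div, inv_inv]
      ring
    all_goals ring
  convert quotient.cpow s using 1 <;> ring

lemma of_cayley {u : ℂ → ℂ} {c₁ c₂ : ℂ}
    (h : HasQuadraticExpansion (fun z => (1 + u z) / (1 - u z)) 1 c₁ c₂) :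
    HasQuadraticExpansion u 0 (c₁ / 2) (c₂ / 2 - c₁ ^ 2 / 4) := by
  -- The Cayley transform `P = (1 + u) / (1 - u)` is inverted by `u = 1 - ((P + 1) / 2)⁻¹`.
  have half_succ : HasQuadraticExpansion (fun z => 1 / 2 * ((1 + u z) / (1 - u z) + 1))
      1 (c₁ / 2) (c₂ / 2) := by
    convert (h.add (const 1)).const_mul (1 / 2) using 1 <;> ring
  have expansion : HasQuadraticExpansion
      (fun z => 1 + -1 * (1 / 2 * ((1 + u z) / (1 - u z) + 1))⁻¹)
      0 (c₁ / 2) (c₂ / 2 - c₁ ^ 2 / 4) := by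
    convert (const 1).add (half_succ.inv.const_mul (-1)) using 1 <;> ring
  refine expansion.congr ?_
  filter_upwards [h.tendsto.eventually_ne one_ne_zero] with z hz
  have one_sub_ne : 1 - u z ≠ 0 := (div_ne_zero_iff.1 hz).2
  field_simp
  ring

end HasQuadraticExpansion

end ComplexPower

section SymmetricQNumber

variable {q : ℝ}

lemma sub_inv_neg (hq0 : 0 < q) (hq1 : q < 1) : q - q⁻¹ < 0 :=
  sub_neg.2 (hq1.trans ((one_lt_inv₀ hq0).2 hq1))

lemma symQ_strictMono (hq0 : 0 < q) (hq1 : q < 1) : StrictMono (symQ q) := fun _ _ hxy =>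
  div_lt_div_of_neg_of_lt (sub_inv_neg hq0 hq1) <| sub_lt_sub
    (Real.rpow_lt_rpow_of_exponent_gt hq0 hq1 hxy)
    (Real.rpow_lt_rpow_of_exponent_gt hq0 hq1 (neg_lt_neg hxy))

lemma symQ_natCast (hq0 : 0 < q) (n : ℕ) : symQ q n = (q ^ n - q⁻¹ ^ n) / (q - q⁻¹) := by
  simp only [symQ, Real.rpow_eq_pow, Real.rpow_neg hq0.le, Real.rpow_natCast, inv_pow]

lemma symQ_pos (hq0 : 0 < q) (hq1 : q < 1) {x : ℝ} (hx : 0 < x) : 0 < symQ q x := by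
  simpa [symQ] using symQ_strictMono hq0 hq1 hx

lemma one_lt_symQ (hq0 : 0 < q) (hq1 : q < 1) {x : ℝ} (hx : 1 < x) : 1 < symQ q x := by
  have symQ_one : symQ q 1 = 1 := by
    simpa [div_self (sub_inv_neg hq0 hq1).ne] using symQ_natCast hq0 1
  exact symQ_one ▸ symQ_strictMono hq0 hq1 hx

lemma HasQuadraticExpansion.dq {H : ℂ → ℂ} {p₀ p₁ p₂ : ℂ} (hq0 : 0 < q) (hq1 : q < 1)
    (h : HasQuadraticExpansion (fun z => H z / z) p₀ p₁ p₂) :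
    HasQuadraticExpansion (Dq q H) p₀ (symQ q 2 * p₁) (symQ q 3 * p₂) := by
  have q_ne : (q : ℂ) ≠ 0 := by exact_mod_cast hq0.ne'
  have den_ne : (q : ℂ) - (q : ℂ)⁻¹ ≠ 0 := by exact_mod_cast (sub_inv_neg hq0 hq1).ne
  have symQ_two : (symQ q 2 : ℂ) = ((q : ℂ) ^ 2 - (q : ℂ)⁻¹ ^ 2) / (q - (q : ℂ)⁻¹) := by
    exact_mod_cast symQ_natCast hq0 2
  have symQ_three : (symQ q 3 : ℂ) = ((q : ℂ) ^ 3 - (q : ℂ)⁻¹ ^ 3) / (q - (q : ℂ)⁻¹) := by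
    exact_mod_cast symQ_natCast hq0 3
  have difference :=
    ((h.comp_const_mul q_ne).const_mul ((q : ℂ) / (q - (q : ℂ)⁻¹))).add
      ((h.comp_const_mul (inv_ne_zero q_ne)).const_mul (-(q : ℂ)⁻¹ / (q - (q : ℂ)⁻¹)))
  rw [symQ_two, symQ_three]
  convert difference.congr (G := Dq q H) ?_ using 1
  · rw [← add_mul, ← add_div, ← sub_eq_add_neg, div_self den_ne, one_mul]
  · ring
  · ring
  · filter_upwards [self_mem_nhdsWithin] with z hz
    have hz : z ≠ 0 := hz
    rw [Dq, if_neg hz, div_eq_inv_mul z]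
    generalize (q : ℂ) - (q : ℂ)⁻¹ = D at den_ne
    field_simp
    ring

end SymmetricQNumber

section BernardiOperator

variable {q η : ℝ}

lemma Lcoef_pos (hq0 : 0 < q) (hq1 : q < 1) (hη : -1 < η) {n : ℕ} (hn : 1 ≤ n) :
    0 < Lcoef q η n := by
  have : (1 : ℝ) ≤ n := by exact_mod_cast hn
  exact div_pos (symQ_pos hq0 hq1 (by linarith)) (symQ_pos hq0 hq1 (by linarith))

lemma Lcoef_le_one (hq0 : 0 < q) (hq1 : q < 1) (hη : -1 < η) {n : ℕ} (hn : 1 ≤ n) :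
    Lcoef q η n ≤ 1 := by
  have : (1 : ℝ) ≤ n := by exact_mod_cast hn
  exact div_le_one_of_le₀ ((symQ_strictMono hq0 hq1).monotone (by linarith))
    (symQ_pos hq0 hq1 (by linarith)).le

lemma Lcoef_one (hq0 : 0 < q) (hq1 : q < 1) (hη : -1 < η) : Lcoef q η 1 = 1 := by
  rw [Lcoef, Nat.cast_one]
  exact div_self (symQ_pos hq0 hq1 (by linarith)).ne'

lemma hasFPowerSeriesAt_Jop (hq0 : 0 < q) (hq1 : q < 1) (hη : -1 < η) {h : ℂ → ℂ} {b : ℕ → ℂ}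
    (hb : HasFPowerSeriesAt h (ofScalars ℂ b) 0) :
    HasFPowerSeriesAt (Jop q η h) (ofScalars ℂ fun n => (Lcoef q η n : ℂ) * b n) 0 := by
  have taylorCoeff_eq : taylorCoeff h = b :=
    FormalMultilinearSeries.ofScalars_series_injective ℂ ℂ
      (hb.analyticAt.hasFPowerSeriesAt.eq_formalMultilinearSeries hb)
  have norm_le : ∀ᶠ n in atTop, ‖(Lcoef q η n : ℂ) * b n‖ ≤ ‖b n‖ := by
    filter_upwards [eventually_ge_atTop 1] with n hn
    rw [norm_mul, norm_real, Real.norm_of_nonneg (Lcoef_pos hq0 hq1 hη hn).le]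
    exact mul_le_of_le_one_left (norm_nonneg _) (Lcoef_le_one hq0 hq1 hη hn)
  have series := hasFPowerSeriesAt_tsum
    (hb.radius_pos.trans_le (radius_ofScalars_le_of_eventually_norm_le norm_le))
  rwa [← taylorCoeff_eq] at series ⊢

lemma hasQuadraticExpansion_Jop_div (hq0 : 0 < q) (hq1 : q < 1) (hη : -1 < η) {h : ℂ → ℂ}
    {b : ℕ → ℂ} (hb : HasFPowerSeriesAt h (ofScalars ℂ b) 0) (h0 : h 0 = 0) (hb1 : b 1 = 1) :
    HasQuadraticExpansion (fun z => Jop q η h z / z) 1 (Lcoef q η 2 * b 2) (Lcoef q η 3 * b 3) := by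
  have series := hasFPowerSeriesAt_Jop hq0 hq1 hη hb
  have b_zero : b 0 = 0 := by simpa [h0] using hb.coeff_zero ![]
  have Jop_zero : Jop q η h 0 = 0 := by simpa [b_zero] using (series.coeff_zero ![]).symm
  simpa [hb1, Lcoef_one hq0 hq1 hη] using
    HasQuadraticExpansion.div_self_of_hasFPowerSeriesAt series Jop_zero

end BernardiOperator

section CoefficientRelations

variable {q η lam mu : ℝ}

lemma hasQuadraticExpansion_Phi (hq0 : 0 < q) (hq1 : q < 1) {h : ℂ → ℂ} {A B : ℂ}
    (hJ : HasQuadraticExpansion (fun z => Jop q η h z / z) 1 A B) :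
    HasQuadraticExpansion (Phi q η lam mu h) 1 (lam * symQ q 2 * M2v q mu * A)
      ((lam * symQ q 3 - 1) * M3v q mu * B +
        lam * (lam * M2v q mu ^ 2 - N2v q mu) / 2 * (symQ q 2 * A) ^ 2) := by
  have derivative := hJ.dq hq0 hq1
  have second_derivative := HasQuadraticExpansion.dq (H := fun ζ => ζ * Dq q (Jop q η h) ζ) hq0 hq1
    (derivative.congr <| by
      filter_upwards [self_mem_nhdsWithin] with z hz using (mul_div_cancel_left₀ _ hz).symm)
  have odd_part : HasQuadraticExpansion
      (fun z => (Jop q η h z - Jop q η h (-z)) / z) 2 0 (2 * B) := by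
    convert hJ.add (hJ.comp_const_mul (k := -1) (by norm_num)) using 1
    · funext z
      rw [neg_one_mul, div_neg]
      ring
    · norm_num
    all_goals ring
  have odd_part_derivative : HasQuadraticExpansion
      (Dq q fun ζ => Jop q η h ζ - Jop q η h (-ζ)) 2 0 (2 * (symQ q 3 * B)) := by
    convert odd_part.dq hq0 hq1 using 1 <;> ring
  have product := (derivative.cpow_two_mul_cpow_div odd_part lam mu).mul
    (second_derivative.cpow_two_mul_cpow_div odd_part_derivative lam ((1 - mu : ℝ) : ℂ))
  convert product using 1
  · funext z
    rw [Phi, div_div_eq_mul_div]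
    ring_nf
  · ring
  · simp only [M2v]
    push_cast
    ring
  · simp only [M2v, M3v, N2v]
    push_cast
    ring

lemma hasQuadraticExpansion_comp_of_cayley {φ w : ℂ → ℂ} {E c : ℕ → ℂ}
    (hφ : HasFPowerSeriesAt φ (ofScalars ℂ E) 0)
    (hc : HasFPowerSeriesAt (fun z => (1 + w z) / (1 - w z)) (ofScalars ℂ c) 0) (hc0 : c 0 = 1) :
    HasQuadraticExpansion (φ ∘ w) (E 0) (E 1 * (c 1 / 2))
      (E 1 * (c 2 / 2 - c 1 ^ 2 / 4) + E 2 * (c 1 / 2) ^ 2) := by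
  have cayley := HasQuadraticExpansion.of_hasFPowerSeriesAt hc
  simp only [FormalMultilinearSeries.coeff_ofScalars, hc0] at cayley
  have composition := HasQuadraticExpansion.comp_of_hasFPowerSeriesAt hφ cayley.of_cayley
  simp only [FormalMultilinearSeries.coeff_ofScalars] at composition
  exact composition

lemma coeff_relations_of_Phi_eq_comp (hq0 : 0 < q) (hq1 : q < 1) (hη : -1 < η)
    {h φ w : ℂ → ℂ} {b E c : ℕ → ℂ}
    (hb : HasFPowerSeriesAt h (ofScalars ℂ b) 0) (h0 : h 0 = 0) (hb1 : b 1 = 1)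
    (hφ : HasFPowerSeriesAt φ (ofScalars ℂ E) 0)
    (hc : HasFPowerSeriesAt (fun z => (1 + w z) / (1 - w z)) (ofScalars ℂ c) 0) (hc0 : c 0 = 1)
    (hsub : Phi q η lam mu h =ᶠ[𝓝[≠] 0] φ ∘ w) :
    lam * symQ q 2 * M2v q mu * (Lcoef q η 2 * b 2) = E 1 * (c 1 / 2) ∧
      (lam * symQ q 3 - 1) * M3v q mu * (Lcoef q η 3 * b 3) +
          lam * (lam * M2v q mu ^ 2 - N2v q mu) / 2 * (symQ q 2 * (Lcoef q η 2 * b 2)) ^ 2 =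
        E 1 * (c 2 / 2 - c 1 ^ 2 / 4) + E 2 * (c 1 / 2) ^ 2 :=
  ((hasQuadraticExpansion_Phi hq0 hq1
    (hasQuadraticExpansion_Jop_div hq0 hq1 hη hb h0 hb1)).congr hsub).unique
    (hasQuadraticExpansion_comp_of_cayley hφ hc hc0) |>.2

end CoefficientRelations

lemma eventuallyEq_nhdsNE_of_eq_on_ball {E α : Type*} [SeminormedAddCommGroup E] {F G : E → α}
    {r : ℝ} (hr : 0 < r) (h : ∀ z ∈ ball (0 : E) r, z ≠ 0 → F z = G z) : F =ᶠ[𝓝[≠] 0] G := by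
  filter_upwards [self_mem_nhdsWithin, nhdsWithin_le_nhds (ball_mem_nhds 0 hr)]
    with z hz0 hz using h z hz hz0

lemma eq_div_add_div_of_coeff_relations {K : Type*} [Field K] [CharZero K] {A B E x y s t : K}
    (hA : A ≠ 0) (hB : B ≠ 0) (hy : A * y = E * (s / 2))
    (hx : 2 * B * (x - y ^ 2) = 1 / 2 * E * t) :
    x = E * t / (4 * B) + E ^ 2 * s ^ 2 / (4 * A ^ 2) := by
  have sq_eq : E ^ 2 * s ^ 2 / (4 * A ^ 2) = y ^ 2 := by
    rw [div_eq_iff (by simpa using hA)]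
    linear_combination -4 * (A * y + E * (s / 2)) * hy
  have sub_eq : E * t / (4 * B) = x - y ^ 2 := by
    rw [div_eq_iff (by simpa using hB)]
    linear_combination -2 * hx
  rw [sq_eq, sub_eq, sub_add_cancel]

lemma hasFPowerSeriesAt_cayley_of_isSchwarz {u : ℂ → ℂ} {c : ℕ → ℂ} (hu : IsSchwarz u)
    (hc : ∀ z ∈ ball (0 : ℂ) 1, (1 + u z) / (1 - u z) = ∑' n, c n * z ^ n) :
    HasFPowerSeriesAt (fun z => (1 + u z) / (1 - u z)) (ofScalars ℂ c) 0 := by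
  refine hasFPowerSeriesAt_of_eq_tsum_on_ball one_pos hc fun z hz _ => ?_
  have norm_lt : ‖u z‖ < 1 := by simpa using hu.2.2 z hz
  refine div_ne_zero (fun h => ?_) (fun h => ?_)
  · simp [eq_neg_of_add_eq_zero_right h] at norm_lt
  · simp [← sub_eq_zero.1 h] at norm_lt

theorem a3_relations_bernardi_general {q η lam mu : ℝ} (hq0 : 0 < q) (hq1 : q < 1) (hη : -1 < η)
    {f g φ u v : ℂ → ℂ} {a E c d : ℕ → ℂ}
    (hf : HasFPowerSeriesAt f (ofScalars ℂ a) 0) (hf0 : f 0 = 0) (ha1 : a 1 = 1)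
    (hg : AnalyticAt ℂ g 0) (hg0 : g 0 = 0) (hgf : ∀ᶠ z in 𝓝 0, g (f z) = z)
    (hφ : HasFPowerSeriesAt φ (ofScalars ℂ E) 0) (hE1 : E 1 ≠ 0)
    (hsubf : Phi q η lam mu f =ᶠ[𝓝[≠] 0] φ ∘ u) (hsubg : Phi q η lam mu g =ᶠ[𝓝[≠] 0] φ ∘ v)
    (hc : HasFPowerSeriesAt (fun z => (1 + u z) / (1 - u z)) (ofScalars ℂ c) 0) (hc0 : c 0 = 1)
    (hd : HasFPowerSeriesAt (fun w => (1 + v w) / (1 - v w)) (ofScalars ℂ d) 0) (hd0 : d 0 = 1) :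
    2 * ((lam : ℂ) * (symQ q 3 : ℂ) - 1) * (M3v q mu : ℂ) * (Lcoef q η 3 : ℂ) *
        (a 3 - a 2 ^ 2) = 1 / 2 * E 1 * (c 2 - d 2) ∧
      (lam ≠ 0 → lam * symQ q 3 ≠ 1 → M2v q mu ≠ 0 → M3v q mu ≠ 0 →
        a 3 = E 1 * (c 2 - d 2) /
            (4 * ((lam : ℂ) * (symQ q 3 : ℂ) - 1) * (M3v q mu : ℂ) * (Lcoef q η 3 : ℂ)) +
          E 1 ^ 2 * c 1 ^ 2 /
            (4 * (lam : ℂ) ^ 2 * (M2v q mu : ℂ) ^ 2 * (symQ q 2 : ℂ) ^ 2 *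
              (Lcoef q η 2 : ℂ) ^ 2)) := by
  obtain ⟨g_one, g_two, g_three⟩ :=
    coeff_of_leftInverse hf hf0 ha1 hg.hasFPowerSeriesAt hg0 hgf
  obtain ⟨f_linear, f_quadratic⟩ :=
    coeff_relations_of_Phi_eq_comp hq0 hq1 hη hf hf0 ha1 hφ hc hc0 hsubf
  obtain ⟨g_linear, g_quadratic⟩ :=
    coeff_relations_of_Phi_eq_comp hq0 hq1 hη hg.hasFPowerSeriesAt hg0 g_one hφ hd hd0 hsubg
  simp only [g_two, g_three] at g_linear g_quadratic
  have d_one : d 1 = -c 1 :=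
    mul_left_cancel₀ hE1 (by linear_combination -2 * f_linear - 2 * g_linear)
  rw [d_one] at g_quadratic
  have difference : 2 * ((lam : ℂ) * symQ q 3 - 1) * M3v q mu * Lcoef q η 3 * (a 3 - a 2 ^ 2) =
      1 / 2 * E 1 * (c 2 - d 2) := by
    linear_combination f_quadratic - g_quadratic
  refine ⟨difference, fun hlam hlam3 hM2 hM3 => ?_⟩
  have linear_ne : lam * symQ q 2 * M2v q mu * Lcoef q η 2 ≠ 0 := by
    simp [hlam, hM2, (symQ_pos hq0 hq1 two_pos).ne', (Lcoef_pos hq0 hq1 hη one_le_two).ne']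
  have quadratic_ne : (lam * symQ q 3 - 1) * M3v q mu * Lcoef q η 3 ≠ 0 := by
    simp [sub_ne_zero.2 hlam3, hM3, (Lcoef_pos hq0 hq1 hη (n := 3) (by simp)).ne']
  have formula := eq_div_add_div_of_coeff_relations (K := ℂ) (E := E 1) (x := a 3)
    (A := lam * symQ q 2 * M2v q mu * Lcoef q η 2)
    (B := (lam * symQ q 3 - 1) * M3v q mu * Lcoef q η 3) (y := a 2) (s := c 1) (t := c 2 - d 2)
    (by exact_mod_cast linear_ne) (by exact_mod_cast quadratic_ne)
    (by linear_combination f_linear) (by linear_combination difference)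
  convert formula using 3 <;> ring

theorem a3_relations_bernardi
    (q : ℝ) (hq0 : 0 < q) (hq1 : q < 1)
    (f g : ℂ → ℂ) (a : ℕ → ℂ)
    (hf : AnalyticOnNhd ℂ f (ball 0 1)) (hf0 : f 0 = 0) (hf'0 : deriv f 0 = 1)
    (hfa : ∀ z ∈ ball (0 : ℂ) 1, f z = ∑' n, a n * z ^ n)
    (ha0 : a 0 = 0) (ha1 : a 1 = 1)
    (hfinj : InjOn f (ball 0 1))
    (hg : AnalyticOnNhd ℂ g (ball 0 1)) (hg0 : g 0 = 0)
    (hginj : InjOn g (ball 0 1))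
    (hgf : ∀ᶠ z in nhds (0 : ℂ), g (f z) = z)
    (φ : ℂ → ℂ) (E : ℕ → ℂ) (E1 : ℝ)
    (hφa : AnalyticOnNhd ℂ φ (ball 0 1)) (hφ0 : φ 0 = 1)
    (hφre : ∀ z ∈ ball (0 : ℂ) 1, 0 < (φ z).re)
    (hφE : ∀ z ∈ ball (0 : ℂ) 1, φ z = ∑' n, E n * z ^ n)
    (hE0 : E 0 = 1) (hE1 : E 1 = (E1 : ℂ)) (hE1pos : 0 < E1)
    (lam : ℝ) (hlam : 1 ≤ lam)
    (η : ℝ) (hη : -1 < η)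
    (mu : ℝ) (hmu : 0 ≤ mu)
    (u v : ℂ → ℂ) (hu : IsSchwarz u) (hv : IsSchwarz v)
    (hsubf : ∀ z ∈ ball (0 : ℂ) 1, z ≠ 0 → Phi q η lam mu f z = φ (u z))
    (hsubg : ∀ w ∈ ball (0 : ℂ) 1, w ≠ 0 → Phi q η lam mu g w = φ (v w))
    (c d : ℕ → ℂ) (hc0 : c 0 = 1) (hd0 : d 0 = 1)
    (hc : ∀ z ∈ ball (0 : ℂ) 1, (1 + u z) / (1 - u z) = ∑' n, c n * z ^ n)
    (hd : ∀ w ∈ ball (0 : ℂ) 1, (1 + v w) / (1 - v w) = ∑' n, d n * w ^ n)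
    :
    2 * ((lam : ℂ) * (symQ q 3 : ℂ) - 1) * (M3v q mu : ℂ) * (Lcoef q η 3 : ℂ) *
        (a 3 - a 2 ^ 2) = 1 / 2 * (E1 : ℂ) * (c 2 - d 2) ∧
      (M2v q mu ≠ 0 → M3v q mu ≠ 0 →
        a 3 = (E1 : ℂ) * (c 2 - d 2) /
            (4 * ((lam : ℂ) * (symQ q 3 : ℂ) - 1) * (M3v q mu : ℂ) * (Lcoef q η 3 : ℂ)) +
          (E1 : ℂ) ^ 2 * c 1 ^ 2 /
            (4 * (lam : ℂ) ^ 2 * (M2v q mu : ℂ) ^ 2 * (symQ q 2 : ℂ) ^ 2 *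
              (Lcoef q η 2 : ℂ) ^ 2)) := by
  have f_ne_zero (z : ℂ) (hz : z ∈ ball 0 1) (hz0 : z ≠ 0) : f z ≠ 0 := fun hfz =>
    hz0 (hfinj hz (mem_ball_self one_pos) (hfz.trans hf0.symm))
  have f_series := hasFPowerSeriesAt_of_eq_tsum_on_ball one_pos hfa f_ne_zero
  have φ_series := hasFPowerSeriesAt_of_eq_tsum_on_ball one_pos hφE
    fun z hz _ => ne_zero_of_re_pos (hφre z hz)
  obtain ⟨difference, formula⟩ := a3_relations_bernardi_general hq0 hq1 hη f_series hf0 ha1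
    (hg 0 (mem_ball_self one_pos)) hg0 hgf φ_series (by simpa [hE1] using hE1pos.ne')
    (eventuallyEq_nhdsNE_of_eq_on_ball one_pos hsubf)
    (eventuallyEq_nhdsNE_of_eq_on_ball one_pos hsubg)
    (hasFPowerSeriesAt_cayley_of_isSchwarz hu hc) hc0
    (hasFPowerSeriesAt_cayley_of_isSchwarz hv hd) hd0
  rw [hE1] at difference formula
  have one_lt_lam_mul : 1 < lam * symQ q 3 :=
    one_lt_mul_of_le_of_lt hlam (one_lt_symQ hq0 hq1 (by norm_num))
  exact ⟨difference, formula (by positivity) one_lt_lam_mul.ne'⟩
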